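/- arXiv:2104.03181 — 5 statements merged into one kernel-verified Lean document; each statement's English description precedes it below -/
import Mathlib

section
/- Let S be a connected Hausdorff topological space and let φ : S → OnePoint ℂ be a local homeomorphism into the one-point compactification of ℂ (the Riemann sphere). Suppose U ⊆ S is an open subset such that the restriction of φ to U is a homeomorphism from U onto the range of the coercion ℂ → OnePoint ℂ (that is, onto the complement of the point ∞). Then either U = S, or φ is a homeomorphism from S onto OnePoint ℂ. -/
open OnePoint

theorem isPreconnected_norm_gt_aux (R : ℝ) (hR : 0 < R) :
    IsPreconnected {z : ℂ | R < ‖z‖} := by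
  have h : {z : ℂ | R < ‖z‖} = Complex.exp '' {w : ℂ | Real.log R < w.re} := by
    ext z
    constructor
    · intro hz
      have hz' : R < ‖z‖ := hz
      have h0 : z ≠ 0 := by
        rintro rfl
        simp at hz'
        linarith
      refine ⟨Complex.log z, ?_, Complex.exp_log h0⟩
      show Real.log R < (Complex.log z).re
      rw [Complex.log_re]
      exact Real.log_lt_log hR hz'
    · rintro ⟨w, hw, rfl⟩
      show R < ‖Complex.exp w‖
      rw [Complex.norm_exp]
      exact (Real.log_lt_iff_lt_exp hR).1 hw
  rw [h]
  exact (convex_halfSpace_re_gt _).isPreconnected.image _ Complex.continuous_exp.continuousOn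

/-- Topological content of Lemma 2.1.1: a connected Möbius surface containing a
parabolic surface is either parabolic or elliptic. -/
theorem parabolic_subsurface_dichotomy
    (S : Type*) [TopologicalSpace S] [T2Space S] [ConnectedSpace S]
    (φ : S → OnePoint ℂ) (hφ : IsLocalHomeomorph φ)
    (U : Set S) (hU : IsOpen U)
    (e : U ≃ₜ (Set.range ((↑) : ℂ → OnePoint ℂ)))
    (he : ∀ x : U, (e x : OnePoint ℂ) = φ x) :
    U = Set.univ ∨ IsHomeomorph φ := by
  by_cases hne : U = Set.univ
  · exact Or.inl hne
  right
  -- the inverse of φ on U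
  let c : ℂ → Set.range ((↑) : ℂ → OnePoint ℂ) := fun z => ⟨z, z, rfl⟩
  have hc : Continuous c := OnePoint.continuous_coe.subtype_mk _
  let r : ℂ → S := fun z => (e.symm (c z) : S)
  have hr : Continuous r := continuous_subtype_val.comp (e.symm.continuous.comp hc)
  have hrU : ∀ z, r z ∈ U := fun z => (e.symm (c z)).2
  have hφr : ∀ z, φ (r z) = z := by
    intro z
    rw [← he (e.symm (c z)), e.apply_symm_apply]
  have hinj : ∀ x ∈ U, ∀ y ∈ U, φ x = φ y → x = y := by
    intro x hx y hy h
    have : e ⟨x, hx⟩ = e ⟨y, hy⟩ := Subtype.ext (by rw [he, he]; exact h)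
    exact congrArg Subtype.val (e.injective this)
  have hUne : ∀ x ∈ U, φ x ≠ ∞ := by
    intro x hx h
    obtain ⟨z, hz⟩ := (e ⟨x, hx⟩).2
    rw [he] at hz
    exact OnePoint.coe_ne_infty z (hz.trans h)
  have hfr : ∀ p ∈ frontier U, φ p = ∞ := by
    intro p hp
    by_contra hinf
    obtain ⟨z, hz⟩ := OnePoint.ne_infty_iff_exists.1 hinf
    rw [hU.frontier_eq] at hp
    have hne : p ≠ r z := fun h => hp.2 (h ▸ hrU z)
    obtain ⟨W, V, hW, hV, hpW, hrV, hd⟩ := t2_separation hne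
    have hVo : IsOpen (φ '' (V ∩ U)) := hφ.isOpenMap _ (hV.inter hU)
    have hWo : IsOpen (W ∩ φ ⁻¹' (φ '' (V ∩ U))) := hW.inter (hVo.preimage hφ.continuous)
    obtain ⟨u, ⟨huW, v, hv, hvu⟩, huU⟩ := mem_closure_iff.1 hp.1 _ hWo
      ⟨hpW, r z, ⟨hrV, hrU z⟩, by rw [hφr, hz]⟩
    have := hinj v hv.2 u huU hvu
    subst this
    exact Set.disjoint_left.1 hd huW hv.1
  obtain ⟨p, hp⟩ : (frontier U).Nonempty := by
    rw [nonempty_frontier_iff]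
    exact ⟨⟨r 0, hrU 0⟩, hne⟩
  have hpinf := hfr p hp
  obtain ⟨f, hpf, hf⟩ := hφ p
  have hfx : ∀ x, f x = φ x := fun x => by rw [hf]
  have hmem : (∞ : OnePoint ℂ) ∈ f.target := by
    rw [← hpinf, ← hfx]; exact f.map_source hpf
  have hsinf : f.symm ∞ = p := by
    rw [← hpinf, ← hfx]; exact f.left_inv hpf
  obtain ⟨R, hR, hRt⟩ : ∃ R : ℝ, 0 < R ∧ ∀ z : ℂ, R < ‖z‖ → (z : OnePoint ℂ) ∈ f.target := by
    have h1 := ((OnePoint.isOpen_iff_of_mem hmem).1 f.open_target).2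
    obtain ⟨R, hR, h⟩ := h1.isBounded.exists_pos_norm_le
    refine ⟨R, hR, fun z hz => ?_⟩
    by_contra hcon
    exact absurd (h z hcon) (not_le.2 hz)
  have hev : ∀ᶠ z : ℂ in Filter.coclosedCompact ℂ, R < ‖z‖ := by
    rw [Filter.coclosedCompact_eq_cocompact]
    exact (tendsto_norm_cocompact_atTop (E := ℂ)).eventually_gt_atTop R
  set K : Set ℂ := {z : ℂ | R < ‖z‖} with hK
  let s : ℂ → S := fun z => f.symm z
  have hφs : ∀ z ∈ K, φ (s z) = z := fun z hz => by
    rw [← hfx]; exact f.right_inv (hRt z hz)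
  have hsc : ContinuousOn s K :=
    f.continuousOn_symm.comp OnePoint.continuous_coe.continuousOn (fun z hz => hRt z hz)
  have hpre : IsPreconnected (s '' K) := (isPreconnected_norm_gt_aux R hR).image s hsc
  have hmeet : (s '' K ∩ U).Nonempty := by
    have hKo : IsOpen {x : OnePoint ℂ | x ∉ ((↑) : ℂ → OnePoint ℂ) '' Metric.closedBall 0 R} := by
      exact OnePoint.isOpen_compl_image_coe.2
        ⟨Metric.isClosed_closedBall, isCompact_closedBall _ _⟩
    have hW : IsOpen (f.source ∩ φ ⁻¹' {x | x ∉ ((↑) : ℂ → OnePoint ℂ) '' Metric.closedBall 0 R}) :=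
      f.open_source.inter (hKo.preimage hφ.continuous)
    obtain ⟨u, ⟨hus, hu⟩, huU⟩ := mem_closure_iff.1 (frontier_subset_closure hp) _ hW
      ⟨hpf, by simp [hpinf]⟩
    obtain ⟨z, hz⟩ := OnePoint.ne_infty_iff_exists.1 (hUne u huU)
    refine ⟨u, ⟨z, ?_, ?_⟩, huU⟩
    · by_contra hcon
      refine hu ⟨z, ?_, hz⟩
      simpa [hK] using hcon
    · show f.symm z = u
      rw [hz, ← hfx]
      exact f.left_inv hus
  have hsub : s '' K ⊆ U := by
    by_contra hcon
    obtain ⟨x, hx, hxU⟩ := Set.not_subset.1 hcon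
    have hcl : ∀ y ∈ s '' K, y ∈ closure U → y ∈ U := by
      rintro y ⟨z, hz, rfl⟩ hy
      by_contra hyU
      have hy' : s z ∈ frontier U := by
        rw [hU.frontier_eq]
        exact ⟨hy, hyU⟩
      exact OnePoint.coe_ne_infty z ((hφs z hz).symm.trans (hfr _ hy'))
    obtain ⟨y, -, hyU, hyc⟩ := hpre U (closure U)ᶜ hU isClosed_closure.isOpen_compl
      (fun y hy => by
        by_cases h : y ∈ closure U
        · exact Or.inl (hcl y hy h)
        · exact Or.inr h)
      hmeet ⟨x, hx, fun h => hxU (hcl x hx h)⟩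
    exact hyc (subset_closure hyU)
  have hsr : ∀ z ∈ K, s z = r z := fun z hz =>
    hinj _ (hsub ⟨z, hz, rfl⟩) _ (hrU z) ((hφs z hz).trans (hφr z).symm)
  let g : OnePoint ℂ → S := fun x => x.elim p r
  have hg : Continuous g := by
    rw [OnePoint.continuous_iff]
    refine ⟨?_, hr⟩
    have h1 : Filter.Tendsto f.symm (nhds ∞) (nhds p) := by
      have := f.continuousAt_symm hmem
      rwa [ContinuousAt, hsinf] at this
    have h2 : Filter.Tendsto s (Filter.coclosedCompact ℂ) (nhds p) :=
      h1.comp OnePoint.tendsto_coe_infty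
    refine h2.congr' ?_
    filter_upwards [hev] with z hz
    exact hsr z hz
  have hφg : φ ∘ g = id := by
    funext x
    induction x using OnePoint.rec with
    | infty => exact hpinf
    | coe z => exact hφr z
  have hgl : IsLocalHomeomorph g :=
    IsLocalHomeomorph.of_comp (f := g) (g := φ) (by rw [hφg]; exact (Homeomorph.refl _).isLocalHomeomorph) hφ hg
  have hgs : Set.range g = Set.univ :=
    IsClopen.eq_univ ⟨(isCompact_range hg).isClosed, hgl.isOpenMap.isOpen_range⟩ ⟨p, ∞, rfl⟩
  refine ⟨hφ.continuous, hφ.isOpenMap, ?_, fun x => ⟨g x, congrFun hφg x⟩⟩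
  have hl : Function.LeftInverse φ g := congrFun hφg
  exact (hl.rightInverse_of_surjective (Set.range_eq_univ.1 hgs)).injective
end

section
/- Let A, B ∈ ℝ and let S ⊆ ℝ be a convex set such that A · cos s + B · sin s > 0 for all s ∈ S. Then the function s ↦ arcsinh (A · cos s + B · sin s) is strictly concave on S. -/
/-- The analytic mechanism behind uniqueness of maximal disks/half-spaces: the signed
distance `s ↦ arcsinh (A cos s + B sin s)` is strictly concave where it is positive. -/
theorem strictConcaveOn_arsinh_trig
    (A B : ℝ) (S : Set ℝ) (hS : Convex ℝ S)
    (hpos : ∀ s ∈ S, A * Real.cos s + B * Real.sin s > 0) :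
    StrictConcaveOn ℝ S (fun s => Real.arsinh (A * Real.cos s + B * Real.sin s)) := by
  have hu : ∀ s : ℝ, HasDerivAt (fun s => A * Real.cos s + B * Real.sin s)
      (A * (-Real.sin s) + B * Real.cos s) s := fun s =>
    ((Real.hasDerivAt_cos s).const_mul A).add ((Real.hasDerivAt_sin s).const_mul B)
  have hv : ∀ s : ℝ, HasDerivAt (fun s => A * (-Real.sin s) + B * Real.cos s)
      (A * (-Real.cos s) + B * (-Real.sin s)) s := fun s =>
    ((Real.hasDerivAt_sin s).neg.const_mul A).add ((Real.hasDerivAt_cos s).const_mul B)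
  apply strictConcaveOn_of_deriv2_neg' hS
  · exact (Continuous.arsinh (by fun_prop)).continuousOn
  intro x hx
  have h1 : deriv (fun s => Real.arsinh (A * Real.cos s + B * Real.sin s)) =
      fun s => (A * (-Real.sin s) + B * Real.cos s) /
        √(1 + (A * Real.cos s + B * Real.sin s) ^ 2) := by
    funext s
    rw [(hu s).arsinh.deriv, smul_eq_mul, div_eq_inv_mul]
  have hp := hpos x hx
  have hq : 0 < 1 + (A * Real.cos x + B * Real.sin x) ^ 2 := by positivity
  have hr := Real.sqrt_pos.mpr hq
  have h2 := (hv x).div ((((hu x).pow 2).const_add 1).sqrt hq.ne') hr.ne'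
  simp only [Function.iterate_succ, Function.iterate_zero, Function.comp, id]
  rw [h1]
  refine lt_of_eq_of_lt h2.deriv ?_
  simp only [Pi.pow_apply]
  have e : A * (-Real.cos x) + B * (-Real.sin x) = -(A * Real.cos x + B * Real.sin x) := by ring
  rw [e]
  generalize A * Real.cos x + B * Real.sin x = u at *
  generalize A * (-Real.sin x) + B * Real.cos x = v at *
  apply div_neg_of_neg_of_pos _ (by positivity)
  have a1 : 0 < u * √(1 + u ^ 2) := by positivity
  have a2 : 0 ≤ v ^ 2 * u / √(1 + u ^ 2) := by positivity
  have a3 : -u * √(1 + u ^ 2) - v * (((2 : ℕ) : ℝ) * u ^ (2 - 1) * v / (2 * √(1 + u ^ 2)))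
      = -(u * √(1 + u ^ 2)) - v ^ 2 * u / √(1 + u ^ 2) := by
    generalize √(1 + u ^ 2) = r at *
    push_cast
    field_simp
    try ring
  rw [a3]
  linarith
end

section
/- Let c > 0 and let f : ℝ → ℝ be differentiable with f 0 > −1. Suppose that for all t ≥ 0 one has |f t| ≤ 1 and deriv f t ≥ c · (1 − (f t)²). Then for all t ≥ 0, 1 − f t ≤ (1 − f 0) · exp(−c · (1 + f 0) · t). In particular f t converges to 1 exponentially fast as t → ∞. -/
/-- The differential inequality of Lemma 3.4.1: if `|f| ≤ 1` and
`f' ≥ c (1 − f²)` on `[0, ∞)` with `f 0 > −1`, then `f` converges to `1`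
exponentially fast. -/
theorem exponential_convergence_of_riccati_inequality
    (c : ℝ) (hc : 0 < c) (f : ℝ → ℝ) (hf : Differentiable ℝ f)
    (h0 : f 0 > -1)
    (hbound : ∀ t ≥ (0 : ℝ), |f t| ≤ 1)
    (hderiv : ∀ t ≥ (0 : ℝ), deriv f t ≥ c * (1 - (f t) ^ 2)) :
    ∀ t ≥ (0 : ℝ), 1 - f t ≤ (1 - f 0) * Real.exp (-c * (1 + f 0) * t) := by
  have hmono : MonotoneOn f (Set.Ici 0) := by
    apply monotoneOn_of_deriv_nonneg (convex_Ici 0) hf.continuous.continuousOn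
      hf.differentiableOn
    intro x hx
    rw [interior_Ici] at hx
    have hx0 : (0 : ℝ) ≤ x := le_of_lt hx
    have h1 := abs_le.1 (hbound x hx0)
    have h2 := hderiv x hx0
    have h3 : 0 ≤ c * (1 - (f x) ^ 2) := mul_nonneg hc.le (by nlinarith)
    linarith
  have hg : ∀ x, HasDerivAt (fun t => (1 - f t) * Real.exp (c * (1 + f 0) * t))
      ((-deriv f x) * Real.exp (c * (1 + f 0) * x)
        + (1 - f x) * (Real.exp (c * (1 + f 0) * x) * (c * (1 + f 0) * 1))) x := by
    intro x
    exact ((hf x).hasDerivAt.const_sub 1).mul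
      (((hasDerivAt_id x).const_mul (c * (1 + f 0))).exp)
  have hanti : AntitoneOn (fun t => (1 - f t) * Real.exp (c * (1 + f 0) * t))
      (Set.Ici 0) := by
    apply antitoneOn_of_deriv_nonpos (convex_Ici 0)
      (fun x _ => (hg x).continuousAt.continuousWithinAt)
      (fun x _ => (hg x).differentiableAt.differentiableWithinAt)
    intro x hx
    rw [interior_Ici] at hx
    have hx0 : (0 : ℝ) ≤ x := le_of_lt hx
    rw [(hg x).deriv]
    have h1 := abs_le.1 (hbound x hx0)
    have h2 := hderiv x hx0
    have h4 : f 0 ≤ f x := hmono Set.self_mem_Ici hx0 hx0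
    have h5 : 0 ≤ c * ((1 - f x) * (f x - f 0)) :=
      mul_nonneg hc.le (mul_nonneg (by linarith) (by linarith))
    have h6 : -deriv f x + (1 - f x) * (c * (1 + f 0)) ≤ 0 := by nlinarith
    have h7 := mul_nonpos_of_nonpos_of_nonneg h6 (Real.exp_pos (c * (1 + f 0) * x)).le
    linarith
  intro t ht
  have h := hanti Set.self_mem_Ici ht ht
  simp only [mul_zero, Real.exp_zero, mul_one] at h
  have he : -c * (1 + f 0) * t = -(c * (1 + f 0) * t) := by ring
  rw [he, Real.exp_neg, ← div_eq_mul_inv, le_div_iff₀ (Real.exp_pos _)]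
  exact h
end

section
/- Let n : ℕ, let A be a real n × n matrix which is symmetric and positive semidefinite, and let t ≥ 0. Then both matrices ((cosh t) • 1 + (sinh t) • A)² − (sinh t)² • (1 + A²) and (2 (cosh t)²) • (1 + A²) − ((cosh t) • 1 + (sinh t) • A)² are positive semidefinite. Equivalently, in the Loewner order, (sinh t)² (1 + A²) ≤ ((cosh t) 1 + (sinh t) A)² ≤ 2 (cosh t)² (1 + A²). -/
/-- The matrix inequality underlying Lemma 4.1.1: for `A` symmetric positive
semidefinite and `t ≥ 0`,
`sinh²(t) (1 + A²) ≤ ((cosh t) 1 + (sinh t) A)² ≤ 2 cosh²(t) (1 + A²)`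
in the Loewner order. -/
theorem parallel_metric_sandwich
    (n : ℕ) (A : Matrix (Fin n) (Fin n) ℝ) (hA : A.PosSemidef)
    (t : ℝ) (ht : 0 ≤ t) :
    ((Real.cosh t • (1 : Matrix (Fin n) (Fin n) ℝ) + Real.sinh t • A) ^ 2
        - Real.sinh t ^ 2 • ((1 : Matrix (Fin n) (Fin n) ℝ) + A ^ 2)).PosSemidef ∧
    ((2 * Real.cosh t ^ 2) • ((1 : Matrix (Fin n) (Fin n) ℝ) + A ^ 2)
        - (Real.cosh t • (1 : Matrix (Fin n) (Fin n) ℝ) + Real.sinh t • A) ^ 2).PosSemidef := by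
  have hc : Real.cosh t ^ 2 = Real.sinh t ^ 2 + 1 := Real.cosh_sq t
  have hs : 0 ≤ Real.sinh t := Real.sinh_nonneg_iff.mpr ht
  have hc0 : 0 ≤ Real.cosh t := (Real.cosh_pos t).le
  have hsq : (A ^ 2).PosSemidef := hA.pow 2
  constructor
  · have h1 : (Real.cosh t • (1 : Matrix (Fin n) (Fin n) ℝ) + Real.sinh t • A) ^ 2
        - Real.sinh t ^ 2 • ((1 : Matrix (Fin n) (Fin n) ℝ) + A ^ 2)
        = 1 + (2 * Real.cosh t * Real.sinh t) • A := by
      simp only [pow_two A, pow_two (_ + _), mul_add, add_mul, smul_mul_assoc, mul_smul_comm,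
        one_mul, mul_one]
      match_scalars <;> linarith
    rw [h1]
    exact Matrix.PosSemidef.one.add (hA.smul (by positivity))
  · have h2 : (2 * Real.cosh t ^ 2) • ((1 : Matrix (Fin n) (Fin n) ℝ) + A ^ 2)
        - (Real.cosh t • (1 : Matrix (Fin n) (Fin n) ℝ) + Real.sinh t • A) ^ 2
        = (Real.cosh t • (1 : Matrix (Fin n) (Fin n) ℝ) - Real.sinh t • A) *
            (Real.cosh t • (1 : Matrix (Fin n) (Fin n) ℝ) - Real.sinh t • A)
          + (2 : ℝ) • A ^ 2 := by
      simp only [pow_two A, pow_two (_ + _), mul_add, add_mul, mul_sub, sub_mul, smul_mul_assoc,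
        mul_smul_comm, one_mul, mul_one]
      match_scalars <;> linarith
    rw [h2]
    refine Matrix.PosSemidef.add ?_ (hsq.smul (by norm_num))
    have h3 := Matrix.posSemidef_conjTranspose_mul_self
      (Real.cosh t • (1 : Matrix (Fin n) (Fin n) ℝ) - Real.sinh t • A)
    rwa [Matrix.conjTranspose_sub, Matrix.conjTranspose_smul, Matrix.conjTranspose_smul,
      Matrix.conjTranspose_one, hA.isHermitian.eq, star_trivial, star_trivial] at h3
end

section
/- Let k ∈ (0,1) and let A : ℝ → Matrix (Fin 2) (Fin 2) ℝ satisfy, for every t ∈ ℝ, HasDerivAt A (1 − (A t)²) t (the tube-formula Riccati equation Ȧ = Id − A²). Suppose A 0 is symmetric and positive definite with det (A 0) = k. Then for every t > 0, k < det (A t) and det (A t) < 1. -/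
attribute [local instance] Matrix.normedAddCommGroup Matrix.normedSpace

lemma const_of_hasDerivAt_zero (f : ℝ → ℝ) (h : ∀ t, HasDerivAt f 0 t) (t : ℝ) : f t = f 0 :=
  is_const_of_deriv_eq_zero (fun x => (h x).differentiableAt) (fun x => (h x).deriv) t 0

lemma scalar_system (k : ℝ) (hk : k ∈ Set.Ioo (0 : ℝ) 1) (T D : ℝ → ℝ)
    (hT : ∀ t, HasDerivAt T (2 + 2 * D t - T t ^ 2) t)
    (hD : ∀ t, HasDerivAt D (T t * (1 - D t)) t)
    (hT0 : 0 < T 0) (hD0 : D 0 = k) (t : ℝ) (ht : 0 < t) : k < D t ∧ D t < 1 := by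
  obtain ⟨hk0, hk1⟩ := hk
  have hTc : Continuous T := continuous_iff_continuousAt.2 fun x => (hT x).continuousAt
  obtain ⟨E, hE0, hEpos, hE⟩ : ∃ E : ℝ → ℝ, E 0 = 1 ∧ (∀ t, 0 < E t) ∧
      ∀ t, HasDerivAt E (E t * T t) t := by
    refine ⟨fun t => Real.exp (∫ x in (0:ℝ)..t, T x), by simp, fun t => Real.exp_pos _, ?_⟩
    intro t
    exact (hTc.integral_hasStrictDerivAt 0 t).hasDerivAt.exp
  have h1 : ∀ t, (1 - D t) * E t = 1 - k := by
    intro t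
    have := const_of_hasDerivAt_zero (fun t => (1 - D t) * E t) (fun s => by
      refine (((hD s).const_sub 1).mul (hE s)).congr_deriv ?_
      ring) t
    simpa [hE0, hD0] using this
  have hexp : ∀ c s : ℝ, HasDerivAt (fun t => Real.exp (c * t)) (Real.exp (c * s) * c) s := by
    intro c s
    simpa using ((hasDerivAt_id s).const_mul c).exp
  have h2 : ∀ c : ℝ, c ^ 2 = 4 → ∀ t,
      (E t * T t + c * (E t - (1 - k) / 2)) * Real.exp (-c * t) = T 0 + c * (1 + k) / 2 := by
    intro c hc t
    have := const_of_hasDerivAt_zero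
      (fun t => (E t * T t + c * (E t - (1 - k) / 2)) * Real.exp (-c * t)) (fun s => by
      refine ((((hE s).mul (hT s)).add (((hE s).sub_const ((1-k)/2)).const_mul c)).mul
        (hexp (-c) s)).congr_deriv ?_
      simp only [Pi.mul_apply, Pi.add_apply]
      linear_combination (-Real.exp (-c * s)) * (2 * h1 s + (E s - (1 - k) / 2) * hc)) t
    simp only [hE0, mul_zero, Real.exp_zero] at this
    linarith
  have hp := h2 2 (by norm_num) t
  have hm := h2 (-2) (by norm_num) t
  have hxy : Real.exp (-2 * t) * Real.exp (-(-2) * t) = 1 := by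
    rw [← Real.exp_add]; simp
  have hx : 1 < Real.exp (-(-2) * t) := by
    apply Real.one_lt_exp_iff.2; linarith
  have hy : 0 < Real.exp (-2 * t) := Real.exp_pos _
  generalize Real.exp (-2 * t) = y at *
  generalize Real.exp (-(-2) * t) = x at *
  have hy1 : y < 1 := by nlinarith
  have key : 4 * (E t - 1) = (1 + k) * (x + y - 2) + T 0 * (x - y) := by
    linear_combination x * hp - y * hm - 4 * (E t - (1 - k) / 2) * hxy
  have hs : 0 < x + y - 2 := by nlinarith [mul_pos (sub_pos.2 hx) (sub_pos.2 hy1)]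
  have hE1 : 1 < E t := by
    have := mul_pos (by linarith : 0 < 1 + k) hs
    have := mul_pos hT0 (by linarith : 0 < x - y)
    linarith
  have h1t := h1 t
  have hlt : 0 < 1 - D t := by
    by_contra h
    nlinarith [hEpos t]
  constructor <;> nlinarith

/-- Lemma 4.5.1: if the shape operator `A` evolves by the tube-formula Riccati
equation `Ȧ = Id − A²`, with `A 0` symmetric positive definite of determinant
`k ∈ (0,1)`, then for all `t > 0` the determinant satisfies `k < det (A t) < 1`. -/
theorem extrinsic_curvature_along_normal_flow
    (k : ℝ) (hk : k ∈ Set.Ioo (0 : ℝ) 1)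
    (A : ℝ → Matrix (Fin 2) (Fin 2) ℝ)
    (hA : ∀ t : ℝ, HasDerivAt A (1 - (A t) ^ 2) t)
    (hsymm : (A 0).IsSymm) (hpos : (A 0).PosDef) (hdet : (A 0).det = k) :
    ∀ t > (0 : ℝ), k < (A t).det ∧ (A t).det < 1 := by
  intro t ht
  have hent : ∀ (i j : Fin 2) (s : ℝ),
      HasDerivAt (fun t => A t i j) ((1 - (A s) ^ 2 : Matrix (Fin 2) (Fin 2) ℝ) i j) s := by
    intro i j s
    exact hasDerivAt_pi.1 (hasDerivAt_pi.1 (hA s) i) j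
  refine scalar_system k hk (fun t => A t 0 0 + A t 1 1) (fun t => (A t).det) ?_ ?_ ?_ hdet t ht
  · intro s
    refine ((hent 0 0 s).add (hent 1 1 s)).congr_deriv ?_
    simp [pow_two, Matrix.mul_apply, Fin.sum_univ_two, Matrix.det_fin_two]
    ring
  · intro s
    simp only [Matrix.det_fin_two]
    refine (((hent 0 0 s).mul (hent 1 1 s)).sub ((hent 0 1 s).mul (hent 1 0 s))).congr_deriv ?_
    simp [pow_two, Matrix.mul_apply, Fin.sum_univ_two]
    ring
  · exact add_pos hpos.diag_pos hpos.diag_pos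
end
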